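/- arXiv:2406.02599 — 3 statements merged into one kernel-verified Lean document; each statement's English description precedes it below -/
import Mathlib

section
/- (Theorem 2, error of ERM) For every 1 ≤ j ≤ m−1 and every x ∈ [B_j, B_{j+1}), the mean absolute error of the ERM mechanism with uniform bins satisfies Σ_{i=1}^{m} p(x,i)·|B_i − x| ≤ (4/γ)·log(m)·(c+Δ) + (2c+2Δ)/(m−1). -/
/-!
The mechanism draws a left bin `B l` (`l ≤ j`) from `q j` and, independently, a right bin `B r`
(`r ≥ j + 1`) from the reflected `q (m - j)`, then outputs one of the two by unbiased randomized
rounding. With `a = x - B l` and `b = B r - x` the conditional error is `2ab / (a + b)`, which is at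
most `(a + b) / 2`, that is, half of `(B j - B l) + (B r - B (j + 1)) + (B (j + 1) - B j)`.

The ERM distribution is a Gibbs distribution whose energy is proportional to the distance from the
top bin. If some state has zero energy, the partition function is at least `1`, and Jensen's
inequality bounds the mean energy by the logarithm of the number of states. So each mean gap is at
most `2 log m / γ` times the range of the bins drawn from, and the two ranges add up to at most
`B m - B 1`. On the right, where `q` is reflected, this uses only that the bins are symmetric about
their midpoint, not that they are uniform.
-/

open Finset

/-- Output distribution of the quantization mechanism: for input `x ∈ [B j, B (j+1))`,
`outProb m B q j x i` is the probability that the output is bin `B i`. -/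
noncomputable def outProb (m : ℕ) (B : ℕ → ℝ) (q : ℕ → ℕ → ℝ) (j : ℕ) (x : ℝ) (i : ℕ) : ℝ :=
  if i ≤ j then
    q j i * ∑ r ∈ Finset.Icc (j + 1) m, q (m - j) (m - r + 1) * ((B r - x) / (B r - B i))
  else
    q (m - j) (m + 1 - i) * ∑ l ∈ Finset.Icc 1 j, q j l * ((x - B l) / (B i - B l))

/-- ERM selection distribution with parameter `γ`:
`q_j(i) = exp(γ(B i − B j)/(2(B j − B 1))) / Σ_{k=1}^j exp(γ(B k − B j)/(2(B j − B 1)))`.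
(At `j = 1` this evaluates to `q_1(1) = 1`, since in Lean `0/0 = 0` and `exp 0 = 1`.) -/
noncomputable def qERM (γ : ℝ) (B : ℕ → ℝ) (j i : ℕ) : ℝ :=
  Real.exp (γ * (B i - B j) / (2 * (B j - B 1))) /
    ∑ k ∈ Finset.Icc 1 j, Real.exp (γ * (B k - B j) / (2 * (B j - B 1)))

section Gibbs

variable {ι : Type*} {s : Finset ι}

lemma sum_gibbs_mul_le_log_card_div (hs : s.Nonempty) (f : ι → ℝ) :
    ∑ i ∈ s, Real.exp (-f i) / (∑ k ∈ s, Real.exp (-f k)) * f i ≤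
      Real.log (#s / ∑ k ∈ s, Real.exp (-f k)) := by
  set Z := ∑ k ∈ s, Real.exp (-f k)
  have hZ : 0 < Z := sum_pos (fun _ _ => Real.exp_pos _) hs
  have hcard : (0 : ℝ) < #s := by exact_mod_cast hs.card_pos
  have hweights : ∑ i ∈ s, Real.exp (-f i) / Z = 1 := by rw [← sum_div, div_self hZ.ne']
  rw [Real.le_log_iff_exp_le (div_pos hcard hZ)]
  calc Real.exp (∑ i ∈ s, Real.exp (-f i) / Z * f i)
      ≤ ∑ i ∈ s, Real.exp (-f i) / Z * Real.exp (f i) :=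
        convexOn_exp.map_sum_le (fun _ _ => by positivity) hweights fun _ _ => Set.mem_univ _
    _ = ∑ _i ∈ s, 1 / Z :=
        sum_congr rfl fun i _ => by rw [div_mul_eq_mul_div, ← Real.exp_add, neg_add_cancel,
          Real.exp_zero]
    _ = #s / Z := by rw [sum_const, nsmul_eq_mul, mul_one_div]

lemma sum_gibbs_mul_le_log_card {f : ι → ℝ} {i₀ : ι} (hi₀ : i₀ ∈ s) (hf : f i₀ = 0) :
    ∑ i ∈ s, Real.exp (-f i) / (∑ k ∈ s, Real.exp (-f k)) * f i ≤ Real.log #s := by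
  have hs : s.Nonempty := ⟨i₀, hi₀⟩
  have hcard : (0 : ℝ) < #s := by exact_mod_cast hs.card_pos
  have hZ : 1 ≤ ∑ k ∈ s, Real.exp (-f k) := by
    simpa [hf] using
      single_le_sum (f := fun k => Real.exp (-f k)) (fun _ _ => (Real.exp_pos _).le) hi₀
  exact (sum_gibbs_mul_le_log_card_div hs f).trans
    (Real.log_le_log (div_pos hcard (one_pos.trans_le hZ)) (div_le_self hcard.le hZ))

end Gibbs

/-- For every `k ≥ 1`, the restriction of `q k` to the bins `1, …, k` is a probability
distribution. This is all that the mechanism `outProb` needs from its selection rule. -/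
structure IsSelectionFamily (q : ℕ → ℕ → ℝ) : Prop where
  nonneg : ∀ {k i : ℕ}, i ∈ Icc 1 k → 0 ≤ q k i
  sum_eq_one : ∀ {k : ℕ}, 1 ≤ k → ∑ i ∈ Icc 1 k, q k i = 1

lemma isSelectionFamily_qERM (γ : ℝ) (B : ℕ → ℝ) : IsSelectionFamily (qERM γ B) where
  nonneg _ := div_nonneg (Real.exp_pos _).le (sum_nonneg fun _ _ => (Real.exp_pos _).le)
  sum_eq_one hk := by
    simp only [qERM]
    rw [← sum_div]
    exact div_self (sum_pos (fun _ _ => Real.exp_pos _) (nonempty_Icc.mpr hk)).ne'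

lemma qERM_eq_gibbs (γ : ℝ) (B : ℕ → ℝ) (k i : ℕ) :
    qERM γ B k i = Real.exp (-(γ * (B k - B i) / (2 * (B k - B 1)))) /
      ∑ l ∈ Icc 1 k, Real.exp (-(γ * (B k - B l) / (2 * (B k - B 1)))) := by
  simp only [qERM, ← neg_div, ← mul_neg, neg_sub]

lemma sum_qERM_mul_sub_le {γ : ℝ} (hγ : 0 < γ) {B : ℕ → ℝ} {k : ℕ} (hk : 1 ≤ k)
    (hB : MonotoneOn B (Set.Icc 1 k)) :
    ∑ i ∈ Icc 1 k, qERM γ B k i * (B k - B i) ≤ 2 * (Real.log k / γ) * (B k - B 1) := by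
  have hone : 1 ∈ Set.Icc 1 k := ⟨le_rfl, hk⟩
  have htop : k ∈ Set.Icc 1 k := ⟨hk, le_rfl⟩
  rcases (hB hone htop hk).eq_or_lt with heq | hlt
  · have hconst : ∀ i ∈ Icc 1 k, B i = B k := fun i hi =>
      have hi' := mem_Icc.mp hi
      (hB hi' htop hi'.2).antisymm (heq ▸ hB hone hi' hi'.1)
    rw [sum_eq_zero fun i hi => by rw [hconst i hi, sub_self, mul_zero], heq, sub_self, mul_zero]
  · have hrange : 0 < B k - B 1 := sub_pos.mpr hlt
    set energy : ℕ → ℝ := fun i => γ * (B k - B i) / (2 * (B k - B 1)) with henergy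
    have hgap (i : ℕ) : B k - B i = 2 / γ * (B k - B 1) * energy i := by
      rw [henergy]
      field_simp [hrange.ne', hγ.ne']
    have hmean : ∑ i ∈ Icc 1 k, qERM γ B k i * energy i ≤ Real.log k := by
      simpa only [qERM_eq_gibbs, Nat.card_Icc, Nat.add_sub_cancel] using
        sum_gibbs_mul_le_log_card (f := energy) (right_mem_Icc.mpr hk) (by simp [henergy])
    calc ∑ i ∈ Icc 1 k, qERM γ B k i * (B k - B i)
        = 2 / γ * (B k - B 1) * ∑ i ∈ Icc 1 k, qERM γ B k i * energy i := by
          rw [mul_sum]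
          exact sum_congr rfl fun i _ => by rw [hgap i]; ring
      _ ≤ 2 / γ * (B k - B 1) * Real.log k := by gcongr
      _ = 2 * (Real.log k / γ) * (B k - B 1) := by ring

lemma rounding_error_le {u v x : ℝ} (hu : u ≤ x) (hv : x ≤ v) :
    (v - x) / (v - u) * |u - x| + (x - u) / (v - u) * |v - x| ≤ (v - u) / 2 := by
  rw [abs_of_nonpos (sub_nonpos.mpr hu), abs_of_nonneg (sub_nonneg.mpr hv)]
  calc (v - x) / (v - u) * -(u - x) + (x - u) / (v - u) * (v - x)
      = 2 * (v - x) * (x - u) / (v - u) := by ring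
    _ ≤ (v - u) / 2 := by
      refine div_le_of_le_mul₀ (by linarith) (by linarith) ?_
      linarith [sq_nonneg ((v - x) - (x - u))]

lemma sum_sum_mul_add {R ι κ : Type*} [CommSemiring R] {s : Finset ι} {t : Finset κ}
    {p : ι → R} {q : κ → R} (hp : ∑ i ∈ s, p i = 1) (hq : ∑ k ∈ t, q k = 1)
    (f : ι → R) (g : κ → R) :
    ∑ i ∈ s, ∑ k ∈ t, p i * q k * (f i + g k) = ∑ i ∈ s, p i * f i + ∑ k ∈ t, q k * g k := by
  calc ∑ i ∈ s, ∑ k ∈ t, p i * q k * (f i + g k)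
      = ∑ i ∈ s, ∑ k ∈ t, (p i * f i * q k + p i * (q k * g k)) :=
        sum_congr rfl fun i _ => sum_congr rfl fun k _ => by ring
    _ = ∑ i ∈ s, p i * f i + ∑ k ∈ t, q k * g k := by
        simp only [sum_add_distrib, ← mul_sum, ← sum_mul, hp, hq, mul_one, one_mul]

lemma sum_Icc_succ_reflect {M : Type*} [AddCommMonoid M] (m j : ℕ) (g : ℕ → M) :
    ∑ r ∈ Icc (j + 1) m, g (m - r + 1) = ∑ i ∈ Icc 1 (m - j), g i := by
  simp only [← Ico_add_one_right_eq_Icc]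
  rw [sum_Ico_reflect (fun i => g (i + 1)) _ le_rfl, sum_Ico_add', Nat.sub_self, zero_add,
    Nat.add_sub_add_right]

section Mechanism

variable {m j : ℕ} {B : ℕ → ℝ} {q : ℕ → ℕ → ℝ} {x : ℝ}

lemma sum_outProb_mul (hj : j ≤ m) (g : ℕ → ℝ) :
    ∑ i ∈ Icc 1 m, outProb m B q j x i * g i =
      ∑ l ∈ Icc 1 j, ∑ r ∈ Icc (j + 1) m, q j l * q (m - j) (m - r + 1) *
        ((B r - x) / (B r - B l) * g l + (x - B l) / (B r - B l) * g r) := by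
  have hleft : ∑ l ∈ Icc 1 j, outProb m B q j x l * g l =
      ∑ l ∈ Icc 1 j, ∑ r ∈ Icc (j + 1) m,
        q j l * q (m - j) (m - r + 1) * ((B r - x) / (B r - B l) * g l) := by
    refine sum_congr rfl fun l hl => ?_
    rw [outProb, if_pos (mem_Icc.mp hl).2, mul_sum, sum_mul]
    exact sum_congr rfl fun r _ => by ring
  have hright : ∑ r ∈ Icc (j + 1) m, outProb m B q j x r * g r =
      ∑ l ∈ Icc 1 j, ∑ r ∈ Icc (j + 1) m,
        q j l * q (m - j) (m - r + 1) * ((x - B l) / (B r - B l) * g r) := by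
    rw [sum_comm]
    refine sum_congr rfl fun r hr => ?_
    rw [mem_Icc] at hr
    rw [outProb, if_neg (by omega), mul_sum, sum_mul, Nat.sub_add_comm hr.2]
    exact sum_congr rfl fun l _ => by ring
  have hsplit : ∑ i ∈ Icc 1 m, outProb m B q j x i * g i =
      ∑ l ∈ Icc 1 j, outProb m B q j x l * g l +
        ∑ r ∈ Icc (j + 1) m, outProb m B q j x r * g r := by
    simp only [← Ico_add_one_right_eq_Icc]
    exact (sum_Ico_consecutive _ (by omega) (by omega)).symm
  simp only [hsplit, hleft, hright, mul_add, sum_add_distrib]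

lemma sum_outProb_mul_abs_sub_le_mean_width (hq : IsSelectionFamily q)
    (hB : MonotoneOn B (Set.Icc 1 m)) (hj : 1 ≤ j) (hjm : j < m) (hx₁ : B j ≤ x)
    (hx₂ : x ≤ B (j + 1)) :
    ∑ i ∈ Icc 1 m, outProb m B q j x i * |B i - x| ≤
      ∑ l ∈ Icc 1 j, ∑ r ∈ Icc (j + 1) m,
        q j l * q (m - j) (m - r + 1) * ((B r - B l) / 2) := by
  rw [sum_outProb_mul hjm.le]
  refine sum_le_sum fun l hl => sum_le_sum fun r hr => ?_
  have hreflect : m - r + 1 ∈ Icc 1 (m - j) := by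
    rw [mem_Icc] at hr ⊢
    omega
  have hweight : 0 ≤ q j l * q (m - j) (m - r + 1) :=
    mul_nonneg (hq.nonneg hl) (hq.nonneg hreflect)
  rw [mem_Icc] at hl hr
  have hlx : B l ≤ x := (hB ⟨hl.1, by omega⟩ ⟨hj, hjm.le⟩ hl.2).trans hx₁
  have hxr : x ≤ B r := hx₂.trans (hB ⟨by omega, hjm⟩ ⟨by omega, hr.2⟩ hr.1)
  exact mul_le_mul_of_nonneg_left (rounding_error_le hlx hxr) hweight

lemma sum_outProb_mul_abs_sub_le_mean_gaps (hq : IsSelectionFamily q)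
    (hB : MonotoneOn B (Set.Icc 1 m)) (hj : 1 ≤ j) (hjm : j < m) (hx₁ : B j ≤ x)
    (hx₂ : x ≤ B (j + 1)) :
    ∑ i ∈ Icc 1 m, outProb m B q j x i * |B i - x| ≤
      (∑ l ∈ Icc 1 j, q j l * (B j - B l) +
        ∑ r ∈ Icc (j + 1) m, q (m - j) (m - r + 1) * (B r - B (j + 1)) +
        (B (j + 1) - B j)) / 2 := by
  have hleft : ∑ l ∈ Icc 1 j, q j l = 1 := hq.sum_eq_one hj
  have hright : ∑ r ∈ Icc (j + 1) m, q (m - j) (m - r + 1) = 1 := by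
    rw [sum_Icc_succ_reflect, hq.sum_eq_one (by omega)]
  calc ∑ i ∈ Icc 1 m, outProb m B q j x i * |B i - x|
      ≤ ∑ l ∈ Icc 1 j, ∑ r ∈ Icc (j + 1) m, q j l * q (m - j) (m - r + 1) * ((B r - B l) / 2) :=
        sum_outProb_mul_abs_sub_le_mean_width hq hB hj hjm hx₁ hx₂
    _ = ∑ l ∈ Icc 1 j, ∑ r ∈ Icc (j + 1) m, q j l * q (m - j) (m - r + 1) *
          ((B j - B l) / 2 + ((B r - B (j + 1)) / 2 + (B (j + 1) - B j) / 2)) :=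
        sum_congr rfl fun l _ => sum_congr rfl fun r _ => by ring
    _ = ∑ l ∈ Icc 1 j, q j l * ((B j - B l) / 2) + ∑ r ∈ Icc (j + 1) m, q (m - j) (m - r + 1) *
          ((B r - B (j + 1)) / 2 + (B (j + 1) - B j) / 2) := sum_sum_mul_add hleft hright _ _
    _ = _ := by
        simp only [mul_add, sum_add_distrib, ← sum_mul, hright, one_mul, ← mul_div_assoc,
          ← sum_div, add_div, add_assoc]

end Mechanism

section SymmetricBins

variable {m j : ℕ} {B : ℕ → ℝ}

lemma sum_reflect_mul_sub_of_symmetric (hsymm : ∀ i ∈ Icc 1 m, B i + B (m + 1 - i) = B 1 + B m)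
    (hjm : j < m) (w : ℕ → ℝ) :
    ∑ r ∈ Icc (j + 1) m, w (m - r + 1) * (B r - B (j + 1)) =
      ∑ i ∈ Icc 1 (m - j), w i * (B (m - j) - B i) := by
  rw [← sum_Icc_succ_reflect]
  refine sum_congr rfl fun r hr => ?_
  have hlow := hsymm (j + 1) (mem_Icc.mpr ⟨by omega, hjm⟩)
  rw [mem_Icc] at hr
  have hr' := hsymm r (mem_Icc.mpr ⟨by omega, hr.2⟩)
  rw [Nat.add_sub_add_right] at hlow
  rw [Nat.sub_add_comm hr.2] at hr'
  rw [show B r - B (j + 1) = B (m - j) - B (m - r + 1) by linarith]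

theorem erm_error_bound_general {γ x : ℝ} (hB : StrictMonoOn B (Set.Icc 1 m))
    (hsymm : ∀ i ∈ Icc 1 m, B i + B (m + 1 - i) = B 1 + B m) (hγ : 0 < γ)
    (hj : 1 ≤ j) (hjm : j < m) (hx₁ : B j ≤ x) (hx₂ : x ≤ B (j + 1)) :
    ∑ i ∈ Icc 1 m, outProb m B (qERM γ B) j x i * |B i - x| ≤
      Real.log m / γ * (B m - B 1) + (B (j + 1) - B j) / 2 := by
  have hmono := hB.monotoneOn
  have hgap {k : ℕ} (hk : 1 ≤ k) (hkm : k ≤ m) :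
      ∑ i ∈ Icc 1 k, qERM γ B k i * (B k - B i) ≤ 2 * (Real.log m / γ) * (B k - B 1) := by
    have hrange : 0 ≤ B k - B 1 := sub_nonneg.mpr (hmono ⟨le_rfl, by omega⟩ ⟨hk, hkm⟩ hk)
    refine (sum_qERM_mul_sub_le hγ hk (hmono.mono (Set.Icc_subset_Icc_right hkm))).trans ?_
    gcongr
  have hright : ∑ r ∈ Icc (j + 1) m, qERM γ B (m - j) (m - r + 1) * (B r - B (j + 1)) ≤
      2 * (Real.log m / γ) * (B m - B (j + 1)) := by
    have hreflect := hsymm (j + 1) (mem_Icc.mpr ⟨by omega, hjm⟩)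
    rw [Nat.add_sub_add_right] at hreflect
    rw [sum_reflect_mul_sub_of_symmetric hsymm hjm,
      show B m - B (j + 1) = B (m - j) - B 1 by linarith]
    exact hgap (by omega) (by omega)
  have hstep : 0 ≤ 2 * (Real.log m / γ) * (B (j + 1) - B j) :=
    mul_nonneg (by positivity) (sub_nonneg.mpr (hx₁.trans hx₂))
  have hleft := hgap hj hjm.le
  refine (sum_outProb_mul_abs_sub_le_mean_gaps (isSelectionFamily_qERM γ B) hmono hj hjm
    hx₁ hx₂).trans ?_
  linarith

end SymmetricBins

section UniformBins

variable {m : ℕ} {B : ℕ → ℝ} {a h : ℝ}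

lemma sub_eq_of_uniform (hB : ∀ i : ℕ, 1 ≤ i → i ≤ m → B i = a + ((i : ℝ) - 1) * h)
    {i k : ℕ} (hi : i ∈ Set.Icc 1 m) (hk : k ∈ Set.Icc 1 m) :
    B k - B i = ((k : ℝ) - i) * h := by
  rw [hB i hi.1 hi.2, hB k hk.1 hk.2]
  ring

lemma strictMonoOn_of_uniform (hB : ∀ i : ℕ, 1 ≤ i → i ≤ m → B i = a + ((i : ℝ) - 1) * h)
    (hh : 0 < h) : StrictMonoOn B (Set.Icc 1 m) := by
  intro i hi k hk hik
  rw [← sub_pos, sub_eq_of_uniform hB hi hk]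
  exact mul_pos (sub_pos.mpr (Nat.cast_lt.mpr hik)) hh

lemma add_reflect_of_uniform (hB : ∀ i : ℕ, 1 ≤ i → i ≤ m → B i = a + ((i : ℝ) - 1) * h) :
    ∀ i ∈ Icc 1 m, B i + B (m + 1 - i) = B 1 + B m := by
  intro i hi
  rw [mem_Icc] at hi
  rw [hB i hi.1 hi.2, hB (m + 1 - i) (by omega) (by omega), hB 1 le_rfl (by omega),
    hB m (by omega) le_rfl]
  push_cast [Nat.cast_sub (by omega : i ≤ m + 1)]
  ring

end UniformBins

/-- (Theorem 2, error of ERM) For every `x ∈ [B j, B (j+1))`, the mean absolute error of the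
ERM mechanism with uniform bins satisfies
`Σ_{i=1}^m p(x,i)|B i − x| ≤ (4/γ) log(m) (c+Δ) + (2c+2Δ)/(m−1)`. -/
theorem erm_error_bound
    (m : ℕ) (hm : 2 ≤ m)
    (c Δ : ℝ) (hc : 0 < c) (hΔ : 0 ≤ Δ)
    (B : ℕ → ℝ)
    (hB : ∀ i : ℕ, 1 ≤ i → i ≤ m →
      B i = -c - Δ + ((i : ℝ) - 1) * ((2 * c + 2 * Δ) / ((m : ℝ) - 1)))
    (γ : ℝ) (hγ : 0 < γ)
    (j : ℕ) (hj1 : 1 ≤ j) (hj2 : j ≤ m - 1)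
    (x : ℝ) (hx1 : B j ≤ x) (hx2 : x < B (j + 1)) :
    ∑ i ∈ Finset.Icc 1 m, outProb m B (qERM γ B) j x i * |B i - x| ≤
      4 / γ * Real.log (m : ℝ) * (c + Δ) + (2 * c + 2 * Δ) / ((m : ℝ) - 1) := by
  have hm_sub : (0 : ℝ) < m - 1 := sub_pos.mpr (by exact_mod_cast hm)
  have hwidth : 0 < (2 * c + 2 * Δ) / ((m : ℝ) - 1) := by positivity
  have hrange : B m - B 1 = 2 * c + 2 * Δ := by
    rw [sub_eq_of_uniform hB ⟨le_rfl, by omega⟩ ⟨by omega, le_rfl⟩, Nat.cast_one,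
      mul_div_cancel₀ _ hm_sub.ne']
  have hstep : B (j + 1) - B j = (2 * c + 2 * Δ) / ((m : ℝ) - 1) := by
    rw [sub_eq_of_uniform hB ⟨hj1, by omega⟩ ⟨by omega, by omega⟩, Nat.cast_succ,
      add_sub_cancel_left, one_mul]
  have hlog : 0 ≤ Real.log m / γ * (2 * c + 2 * Δ) := by positivity
  have hbound := erm_error_bound_general (strictMonoOn_of_uniform hB hwidth)
    (add_reflect_of_uniform hB) hγ hj1 (by omega) hx1 hx2.le
  rw [hrange, hstep] at hbound
  calc _ ≤ _ := hbound
    _ ≤ 2 * (Real.log m / γ * (2 * c + 2 * Δ)) + (2 * c + 2 * Δ) / ((m : ℝ) - 1) := by linarith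
    _ = _ := by ring
end

section
/- Let 1 ≤ i ≤ k ≤ m−2. If q_k(i) ≥ q_{k+1}(i) and q_{m−k}(m−r+1)·(B_r − B_k) ≥ q_{m−k−1}(m−r+1)·(B_r − B_{k+1}) for every r with k+2 ≤ r ≤ m, then the output probabilities at consecutive bin values satisfy p(B_k, i) ≥ p(B_{k+1}, i). -/
/-!
For `i ≤ j`, the probability of output `B i` from an input `x` in cell `j` factors as `q j i` times
the conditional probability of rounding `x` down to `B i`, averaged over the upper candidates `B r`
with `j < r ≤ m`. Raising the cell from `j` to `l` discards the candidates `j < r ≤ l`, each of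
which contributed a nonnegative amount, while the terms of the remaining candidates compare one by
one because the denominators `B r - B i` do not depend on the input.
-/

open Finset

section RoundDown

variable {ι : Type*}

/-- The probability of rounding `x` down to `a`, where the upper candidate `b r`, `r ∈ s`, is drawn
with weight `w r` and `x` is then rounded without bias to one of `a` and `b r`. It is the factor
multiplying `q j i` in the lower-bin case of `outProb`. The weights need not add up to `1`. -/
noncomputable def roundDownProb (s : Finset ι) (w b : ι → ℝ) (a x : ℝ) : ℝ :=
  ∑ r ∈ s, w r * ((b r - x) / (b r - a))

variable {s t : Finset ι} {v w b : ι → ℝ} {a x y : ℝ}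

theorem roundDownProb_le_of_mul_le (ha : ∀ r ∈ s, a < b r)
    (h : ∀ r ∈ s, v r * (b r - y) ≤ w r * (b r - x)) :
    roundDownProb s v b a y ≤ roundDownProb s w b a x := by
  refine sum_le_sum fun r hr => ?_
  rw [← mul_div_assoc, ← mul_div_assoc]
  exact div_le_div_of_nonneg_right (h r hr) (sub_pos.2 (ha r hr)).le

theorem roundDownProb_le_of_subset (hts : t ⊆ s) (hw : ∀ r ∈ s, 0 ≤ w r)
    (ha : ∀ r ∈ s, a < b r) (hx : ∀ r ∈ s, x ≤ b r) :
    roundDownProb t w b a x ≤ roundDownProb s w b a x :=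
  sum_le_sum_of_subset_of_nonneg hts fun r hr _ =>
    mul_nonneg (hw r hr) (div_nonneg (sub_nonneg.2 (hx r hr)) (sub_pos.2 (ha r hr)).le)

theorem roundDownProb_nonneg (hw : ∀ r ∈ s, 0 ≤ w r) (ha : ∀ r ∈ s, a < b r)
    (hx : ∀ r ∈ s, x ≤ b r) : 0 ≤ roundDownProb s w b a x := by
  simpa only [roundDownProb, sum_empty] using
    roundDownProb_le_of_subset (empty_subset s) hw ha hx

end RoundDown

theorem outProb_of_le (m : ℕ) (B : ℕ → ℝ) (q : ℕ → ℕ → ℝ) {i j : ℕ} (hij : i ≤ j) (x : ℝ) :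
    outProb m B q j x i =
      q j i * roundDownProb (Icc (j + 1) m) (fun r => q (m - j) (m - r + 1)) B (B i) x :=
  if_pos hij

theorem output_prob_decreasing_at_bins_general {m : ℕ} {B : ℕ → ℝ}
    (hB : StrictMonoOn B (Set.Icc 1 m)) {q : ℕ → ℕ → ℝ}
    (hq_nonneg : ∀ n i : ℕ, 1 ≤ n → n ≤ m → 0 ≤ q n i)
    {i j l : ℕ} (hi : 1 ≤ i) (hij : i ≤ j) (hjl : j ≤ l) (hl : l < m)
    {x y : ℝ} (hx : x ≤ B (j + 1)) (h1 : q l i ≤ q j i)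
    (h2 : ∀ r : ℕ, l + 1 ≤ r → r ≤ m →
      q (m - l) (m - r + 1) * (B r - y) ≤ q (m - j) (m - r + 1) * (B r - x)) :
    outProb m B q l y i ≤ outProb m B q j x i := by
  have hw : ∀ r ∈ Icc (j + 1) m, 0 ≤ q (m - j) (m - r + 1) := fun r _ =>
    hq_nonneg _ _ (by omega) (by omega)
  have hBi : ∀ r ∈ Icc (j + 1) m, B i < B r := fun r hr => by
    rw [mem_Icc] at hr
    exact hB ⟨hi, by omega⟩ ⟨by omega, hr.2⟩ (by omega)
  have hxB : ∀ r ∈ Icc (j + 1) m, x ≤ B r := fun r hr => by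
    rw [mem_Icc] at hr
    exact hx.trans (hB.monotoneOn ⟨by omega, by omega⟩ ⟨by omega, hr.2⟩ hr.1)
  have hsub : Icc (l + 1) m ⊆ Icc (j + 1) m := Icc_subset_Icc_left (by omega)
  rw [outProb_of_le m B q (hij.trans hjl), outProb_of_le m B q hij]
  refine mul_le_mul_of_nonneg h1 ?_ (hq_nonneg l i (by omega) hl.le)
    (roundDownProb_nonneg hw hBi hxB)
  calc
    _ ≤ roundDownProb (Icc (l + 1) m) (fun r => q (m - j) (m - r + 1)) B (B i) x :=
      roundDownProb_le_of_mul_le (fun r hr => hBi r (hsub hr)) fun r hr =>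
        h2 r (mem_Icc.1 hr).1 (mem_Icc.1 hr).2
    _ ≤ _ := roundDownProb_le_of_subset hsub hw hBi hxB

/-- If `q_k(i) ≥ q_{k+1}(i)` and `q_{m−k}(m−r+1)(B r − B k) ≥ q_{m−k−1}(m−r+1)(B r − B (k+1))`
for every `k+2 ≤ r ≤ m`, then `p(B k, i) ≥ p(B (k+1), i)` (where the input `B k` lies in
`[B k, B (k+1))` and `B (k+1)` lies in `[B (k+1), B (k+2))`). -/
theorem output_prob_decreasing_at_bins
    (m : ℕ) (hm : 3 ≤ m)
    (B : ℕ → ℝ)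
    (hB : ∀ i j : ℕ, 1 ≤ i → i < j → j ≤ m → B i < B j)
    (q : ℕ → ℕ → ℝ)
    (hq_nonneg : ∀ n i : ℕ, 1 ≤ n → n ≤ m → 0 ≤ q n i)
    (hq_sum : ∀ n : ℕ, 1 ≤ n → n ≤ m → ∑ i ∈ Finset.Icc 1 n, q n i = 1)
    (i k : ℕ) (hi : 1 ≤ i) (hik : i ≤ k) (hk : k ≤ m - 2)
    (h1 : q (k + 1) i ≤ q k i)
    (h2 : ∀ r : ℕ, k + 2 ≤ r → r ≤ m →
      q (m - k - 1) (m - r + 1) * (B r - B (k + 1)) ≤ q (m - k) (m - r + 1) * (B r - B k)) :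
    outProb m B q (k + 1) (B (k + 1)) i ≤ outProb m B q k (B k) i :=
  output_prob_decreasing_at_bins_general (fun a ha b hb hab => hB a b ha.1 hab hb.2) hq_nonneg
    hi hik k.le_succ (by omega) (hB k (k + 1) (by omega) (by omega) (by omega)).le h1 h2
end

section
/- (Upper bound on output probabilities under the linear constraints of Theorem 6) Assume: (i) q_j(i) ≥ q_{j+1}(i) for all 1 ≤ i ≤ j ≤ m−1; (ii) q_j(i) ≤ q_j(i+1) for all 1 ≤ i < j ≤ m; (iii) q_i(i) ≥ q_{i+1}(i+1) for all i with s ≤ i ≤ t−1; and (iv) q_{m−k}(m−r+1)·(B_r − B_k) ≥ q_{m−k−1}(m−r+1)·(B_r − B_{k+1}) for all k with s ≤ k ≤ t and all r with k+2 ≤ r ≤ m. Then for every x ∈ [−c, c] and every i ∈ {1,…,m}, p(x,i) ≤ max( p(−c, s−1), q_s(s) ). -/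
/-!
Write `p_j(x, i)` for `outProb m B q j x i`, where `x` lies in the cell `[B j, B (j + 1)]`. For
outputs `i ≤ j`, both `q j i` and the ratios `(B r - x) / (B r - B i)` increase with `i`, so
`p_j(x, i) ≤ p_j(x, j)`. Moreover `p_j(x, j)` decreases in `x`. If `j = s - 1`, the index of the
cell of `-c`, this gives `p_j(x, j) ≤ p_j(-c, j)`. If `j ≥ s`, then `x ≥ B j` gives
`p_j(x, j) ≤ p_j(B j, j) = q j j`, and `q j j ≤ q s s` because the diagonal weights decrease.

The reflection `x ↦ -x`, `i ↦ m + 1 - i` preserves the mechanism and exchanges the outputs above `x`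
with those below it. It maps a half-open cell to one that is open on the left, which is why the
estimates are stated for closed cells.
-/

open Finset

/-- The index `j ∈ {1,…,m−1}` such that `x ∈ [B j, B (j+1))` (for increasing bins and
`x` in range): the largest `j ≤ m−1` with `B j ≤ x`. -/
noncomputable def binIdx (m : ℕ) (B : ℕ → ℝ) (x : ℝ) : ℕ :=
  ((Finset.Icc 1 (m - 1)).filter (fun j => B j ≤ x)).sup id

/-- The output distribution as a function of the input `x`. -/
noncomputable def pFun (m : ℕ) (B : ℕ → ℝ) (q : ℕ → ℕ → ℝ) (x : ℝ) (i : ℕ) : ℝ :=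
  outProb m B q (binIdx m B x) x i

section Cells

variable {m j : ℕ} {B : ℕ → ℝ} {x : ℝ}

lemma exists_mem_Ico_succ {α : Type*} [LinearOrder α] {f : ℕ → α} {a b : ℕ} {y : α} (hab : a ≤ b)
    (ha : f a ≤ y) (hb : y < f b) : ∃ j ∈ Set.Ico a b, y ∈ Set.Ico (f j) (f (j + 1)) := by
  induction b, hab using Nat.le_induction with
  | base => exact absurd hb ha.not_gt
  | succ b hab ih =>
    rcases lt_or_ge y (f b) with hyb | hby
    · obtain ⟨j, hj, hyj⟩ := ih hyb
      exact ⟨j, ⟨hj.1, hj.2.trans b.lt_succ_self⟩, hyj⟩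
    · exact ⟨b, ⟨hab, b.lt_succ_self⟩, hby, hb⟩

lemma binIdx_eq_of_mem_Ico (hB : MonotoneOn B (Set.Icc 1 m)) (hj : j ∈ Set.Ico 1 m)
    (hx : x ∈ Set.Ico (B j) (B (j + 1))) : binIdx m B x = j := by
  obtain ⟨hj1, hjm⟩ := hj
  refine le_antisymm (Finset.sup_le fun l hl => ?_) (Finset.le_sup (f := id) ?_)
  · rw [Finset.mem_filter, Finset.mem_Icc] at hl
    by_contra! hjl
    have hBjl : B (j + 1) ≤ B l := hB ⟨by omega, by omega⟩ ⟨hl.1.1, by omega⟩ hjl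
    exact (hx.2.trans_le hBjl).not_ge hl.2
  · exact Finset.mem_filter.2 ⟨Finset.mem_Icc.2 ⟨hj1, by omega⟩, hx.1⟩

lemma sub_mem_Ico_one (hj : j ∈ Set.Ico 1 m) : m - j ∈ Set.Ico 1 m :=
  ⟨Nat.sub_pos_of_lt hj.2, Nat.sub_lt (hj.1.trans hj.2.le) hj.1⟩

lemma neg_mem_Icc_of_symm (hsym : ∀ i : ℕ, 1 ≤ i → i ≤ m → B i = -B (m + 1 - i))
    (hj : j ∈ Set.Ico 1 m) (hx : x ∈ Set.Icc (B j) (B (j + 1))) :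
    -x ∈ Set.Icc (B (m - j)) (B (m - j + 1)) := by
  obtain ⟨hj1, hjm⟩ := hj
  have h_left : B (j + 1) = -B (m - j) := by
    rw [hsym (j + 1) (by omega) hjm, Nat.add_sub_add_right]
  have h_right : B j = -B (m - j + 1) := by
    rw [hsym j hj1 hjm.le, Nat.sub_add_comm hjm.le]
  constructor <;> linarith [hx.1, hx.2]

end Cells

lemma sum_Icc_reflect {M : Type*} [AddCommMonoid M] (f : ℕ → M) (j m : ℕ) :
    ∑ r ∈ Finset.Icc (j + 1) m, f (m - r + 1) = ∑ i ∈ Finset.Icc 1 (m - j), f i := by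
  calc ∑ r ∈ Finset.Icc (j + 1) m, f (m - r + 1)
      = ∑ r ∈ Finset.Ico (j + 1) (m + 1), f (m + 1 - r) :=
        Finset.sum_congr rfl fun r hr => by rw [Nat.sub_add_comm (Finset.mem_Icc.1 hr).2]
    _ = ∑ i ∈ Finset.Ico (m + 1 + 1 - (m + 1)) (m + 1 + 1 - (j + 1)), f i :=
        Finset.sum_Ico_reflect f (j + 1) (Nat.le_succ _)
    _ = ∑ i ∈ Finset.Icc 1 (m - j), f i := by
        congr 1
        ext i
        simp only [Finset.mem_Ico, Finset.mem_Icc]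
        omega

section OutProb

variable {m i j : ℕ} {B : ℕ → ℝ} {q : ℕ → ℕ → ℝ} {x : ℝ}

lemma outProb_monotoneOn (hB : StrictMonoOn B (Set.Icc 1 m))
    (hq : ∀ n ≤ m, ∀ i ∈ Set.Icc 1 n, 0 ≤ q n i) (hqj : MonotoneOn (q j) (Set.Icc 1 j))
    (hjm : j ≤ m) (hx : x ≤ B (j + 1)) : MonotoneOn (outProb m B q j x) (Set.Icc 1 j) := by
  rintro i ⟨hi, hij⟩ k ⟨hk, hkj⟩ hik
  simp only [outProb, if_pos hij, if_pos hkj]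
  have weight_nonneg : ∀ r ∈ Finset.Icc (j + 1) m, 0 ≤ q (m - j) (m - r + 1) := fun r hr => by
    rw [Finset.mem_Icc] at hr
    exact hq _ (by omega) _ ⟨by omega, by omega⟩
  have ratio_bounds : ∀ r ∈ Finset.Icc (j + 1) m,
      0 ≤ (B r - x) / (B r - B i) ∧ (B r - x) / (B r - B i) ≤ (B r - x) / (B r - B k) := by
    intro r hr
    rw [Finset.mem_Icc] at hr
    have hBik : B i ≤ B k := hB.monotoneOn ⟨hi, by omega⟩ ⟨hk, by omega⟩ hik
    have hBkr : B k < B r := hB ⟨hk, by omega⟩ ⟨by omega, hr.2⟩ (by omega)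
    have hxr : x ≤ B r := hx.trans (hB.monotoneOn ⟨by omega, by omega⟩ ⟨by omega, hr.2⟩ hr.1)
    exact ⟨div_nonneg (by linarith) (by linarith),
      div_le_div_of_nonneg_left (by linarith) (by linarith) (by linarith)⟩
  refine mul_le_mul (hqj ⟨hi, hij⟩ ⟨hk, hkj⟩ hik) (Finset.sum_le_sum fun r hr => ?_)
    (Finset.sum_nonneg fun r hr => ?_) (hq j hjm k ⟨hk, hkj⟩)
  · exact mul_le_mul_of_nonneg_left (ratio_bounds r hr).2 (weight_nonneg r hr)
  · exact mul_nonneg (weight_nonneg r hr) (ratio_bounds r hr).1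

lemma outProb_antitone (hB : StrictMonoOn B (Set.Icc 1 m))
    (hq : ∀ n ≤ m, ∀ i ∈ Set.Icc 1 n, 0 ≤ q n i) (hi : i ∈ Set.Icc 1 j) (hjm : j ≤ m) :
    Antitone fun x => outProb m B q j x i := by
  intro x y hxy
  simp only [outProb, if_pos hi.2]
  obtain ⟨hi1, hij⟩ := hi
  refine mul_le_mul_of_nonneg_left (Finset.sum_le_sum fun r hr => ?_) (hq j hjm i ⟨hi1, hij⟩)
  rw [Finset.mem_Icc] at hr
  have hBir : B i < B r := hB ⟨hi1, by omega⟩ ⟨by omega, hr.2⟩ (by omega)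
  refine mul_le_mul_of_nonneg_left ?_ (hq _ (by omega) _ ⟨by omega, by omega⟩)
  exact div_le_div_of_nonneg_right (by linarith) (by linarith)

lemma outProb_bin_self (hB : StrictMonoOn B (Set.Icc 1 m)) (hj : 1 ≤ j)
    (hsum : ∑ i ∈ Finset.Icc 1 (m - j), q (m - j) i = 1) : outProb m B q j (B j) j = q j j := by
  have weighted_ratio : ∀ r ∈ Finset.Icc (j + 1) m,
      q (m - j) (m - r + 1) * ((B r - B j) / (B r - B j)) = q (m - j) (m - r + 1) := by
    intro r hr
    rw [Finset.mem_Icc] at hr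
    have hBjr : B j < B r := hB ⟨hj, by omega⟩ ⟨by omega, hr.2⟩ hr.1
    rw [div_self (sub_pos.2 hBjr).ne', mul_one]
  rw [outProb, if_pos le_rfl, Finset.sum_congr rfl weighted_ratio, sum_Icc_reflect, hsum, mul_one]

lemma outProb_reflect (q : ℕ → ℕ → ℝ)
    (hsym : ∀ i : ℕ, 1 ≤ i → i ≤ m → B i = -B (m + 1 - i)) (hji : j < i) (him : i ≤ m) (x : ℝ) :
    outProb m B q (m - j) (-x) (m + 1 - i) = outProb m B q j x i := by
  have hmj : m - (m - j) = j := by omega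
  rw [outProb, outProb, if_pos (by omega), if_neg (by omega), hmj]
  congr 1
  calc ∑ r ∈ Finset.Icc (m - j + 1) m, q j (m - r + 1) * ((B r - -x) / (B r - B (m + 1 - i)))
      = ∑ r ∈ Finset.Icc (m - j + 1) m,
          q j (m - r + 1) * ((x - B (m - r + 1)) / (B i - B (m - r + 1))) := by
        refine Finset.sum_congr rfl fun r hr => ?_
        rw [Finset.mem_Icc] at hr
        rw [hsym r (by omega) hr.2, hsym i (by omega) him, Nat.sub_add_comm hr.2]
        congr 2 <;> ring
    _ = ∑ l ∈ Finset.Icc 1 j, q j l * ((x - B l) / (B i - B l)) := by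
        rw [sum_Icc_reflect (fun l => q j l * ((x - B l) / (B i - B l))), hmj]

lemma outProb_le_max_of_le {a t : ℕ} {y z : ℝ} (hB : StrictMonoOn B (Set.Icc 1 m))
    (hq : ∀ n ≤ m, ∀ i ∈ Set.Icc 1 n, 0 ≤ q n i)
    (hsum : ∀ n ∈ Set.Ico 1 m, ∑ i ∈ Finset.Icc 1 n, q n i = 1)
    (hmono : ∀ n ∈ Set.Ico 1 m, MonotoneOn (q n) (Set.Icc 1 n))
    (hdiag : AntitoneOn (fun n => q n n) (Set.Icc (a + 1) t))
    (ha : a ∈ Set.Icc 1 m) (ht : t < m) (hay : B a < y) (hzt : z < B (t + 1))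
    (hx : x ∈ Set.Icc y z) (hj : j ∈ Set.Ico 1 m) (hxj : x ∈ Set.Icc (B j) (B (j + 1)))
    (hi : i ∈ Set.Icc 1 j) :
    outProb m B q j x i ≤ max (outProb m B q a y a) (q (a + 1) (a + 1)) := by
  have haj : a < j + 1 := (hB.lt_iff_lt ha ⟨by omega, hj.2⟩).1 (by linarith [hx.1, hxj.2])
  have hjt : j < t + 1 :=
    (hB.lt_iff_lt ⟨hj.1, hj.2.le⟩ ⟨by omega, ht⟩).1 (by linarith [hx.2, hxj.1])
  have hjj : j ∈ Set.Icc 1 j := ⟨hj.1, le_rfl⟩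
  have h_anti := outProb_antitone hB hq hjj hj.2.le
  refine (outProb_monotoneOn hB hq (hmono j hj) hj.2.le hxj.2 hi hjj hi.2).trans ?_
  rcases (Nat.lt_succ_iff.1 haj).eq_or_lt with rfl | haj
  · exact le_max_of_le_left (h_anti hx.1)
  · refine le_max_of_le_right ?_
    calc outProb m B q j x j ≤ outProb m B q j (B j) j := h_anti hxj.1
      _ = q j j := outProb_bin_self hB hj.1 (hsum _ (sub_mem_Ico_one hj))
      _ ≤ q (a + 1) (a + 1) := hdiag ⟨le_rfl, by omega⟩ ⟨haj, by omega⟩ haj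

lemma outProb_le_max {a t : ℕ} {c : ℝ} (hB : StrictMonoOn B (Set.Icc 1 m))
    (hsym : ∀ i : ℕ, 1 ≤ i → i ≤ m → B i = -B (m + 1 - i))
    (hq : ∀ n ≤ m, ∀ i ∈ Set.Icc 1 n, 0 ≤ q n i)
    (hsum : ∀ n ∈ Set.Ico 1 m, ∑ i ∈ Finset.Icc 1 n, q n i = 1)
    (hmono : ∀ n ∈ Set.Ico 1 m, MonotoneOn (q n) (Set.Icc 1 n))
    (hdiag : AntitoneOn (fun n => q n n) (Set.Icc (a + 1) t))
    (ha : a ∈ Set.Icc 1 m) (ht : t < m) (hac : B a < -c) (hct : c < B (t + 1))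
    (hx : x ∈ Set.Icc (-c) c) (hj : j ∈ Set.Ico 1 m) (hxj : x ∈ Set.Icc (B j) (B (j + 1)))
    (hi : i ∈ Set.Icc 1 m) :
    outProb m B q j x i ≤ max (outProb m B q a (-c) a) (q (a + 1) (a + 1)) := by
  obtain ⟨hi1, him⟩ := hi
  rcases le_or_gt i j with hij | hji
  · exact outProb_le_max_of_le hB hq hsum hmono hdiag ha ht hac hct hx hj hxj ⟨hi1, hij⟩
  · rw [← outProb_reflect q hsym hji him]
    have hx_neg : -x ∈ Set.Icc (-c) c := ⟨neg_le_neg hx.2, neg_le.1 hx.1⟩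
    exact outProb_le_max_of_le hB hq hsum hmono hdiag ha ht hac hct hx_neg
      (sub_mem_Ico_one hj) (neg_mem_Icc_of_symm hsym hj hxj) ⟨by omega, by omega⟩

end OutProb

theorem output_prob_max_bound_thm6_general {m s t : ℕ} {B : ℕ → ℝ} {q : ℕ → ℕ → ℝ} {c : ℝ}
    (hB : ∀ i j : ℕ, 1 ≤ i → i < j → j ≤ m → B i < B j)
    (hsym : ∀ i : ℕ, 1 ≤ i → i ≤ m → B i = -B (m + 1 - i))
    (hs2 : 2 ≤ s) (hst : s ≤ t) (ht : t ≤ m - 1)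
    (hs_lt : B (s - 1) < -c) (hs_gt : -c < B s) (ht_gt : c < B (t + 1))
    (hq_nonneg : ∀ n i : ℕ, 1 ≤ n → n ≤ m → 0 ≤ q n i)
    (hq_sum : ∀ n : ℕ, 1 ≤ n → n ≤ m → ∑ i ∈ Finset.Icc 1 n, q n i = 1)
    (h2 : ∀ i j : ℕ, 1 ≤ i → i < j → j ≤ m → q j i ≤ q j (i + 1))
    (h3 : ∀ i : ℕ, s ≤ i → i ≤ t - 1 → q (i + 1) (i + 1) ≤ q i i) :
    ∀ x ∈ Set.Icc (-c) c, ∀ i ∈ Finset.Icc 1 m,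
      pFun m B q x i ≤ max (pFun m B q (-c) (s - 1)) (q s s) := by
  intro x hx i hi
  obtain ⟨a, rfl⟩ : ∃ a, s = a + 1 := ⟨s - 1, by omega⟩
  rw [Nat.add_sub_cancel] at hs_lt ⊢
  have h_bins : StrictMonoOn B (Set.Icc 1 m) := fun i hi j hj hij => hB i j hi.1 hij hj.2
  have hmono : ∀ n ∈ Set.Ico 1 m, MonotoneOn (q n) (Set.Icc 1 n) := fun n hn =>
    monotoneOn_of_le_add_one Set.ordConnected_Icc fun i _ hi hi' => h2 i n hi.1 hi'.2 hn.2.le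
  have hdiag : AntitoneOn (fun n => q n n) (Set.Icc (a + 1) t) :=
    antitoneOn_of_add_one_le Set.ordConnected_Icc fun i _ hi hi' =>
      h3 i hi.1 (Nat.le_sub_one_of_lt hi'.2)
  obtain ⟨j, ⟨haj, hjt⟩, hxj⟩ := exists_mem_Ico_succ (f := B) (show a ≤ t + 1 by omega)
    (hs_lt.le.trans hx.1) (hx.2.trans_lt ht_gt)
  have hj : j ∈ Set.Ico 1 m := ⟨by omega, by omega⟩
  rw [pFun, pFun, binIdx_eq_of_mem_Ico h_bins.monotoneOn hj hxj,
    binIdx_eq_of_mem_Ico h_bins.monotoneOn ⟨by omega, by omega⟩ ⟨hs_lt.le, hs_gt⟩]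
  exact outProb_le_max h_bins hsym (fun n hn i hi => hq_nonneg n i (hi.1.trans hi.2) hn)
    (fun n hn => hq_sum n hn.1 hn.2.le) hmono hdiag ⟨by omega, by omega⟩ (by omega) hs_lt
    ht_gt hx hj (Set.Ico_subset_Icc_self hxj) (Finset.mem_Icc.1 hi)

/-- (Upper bound on output probabilities under the linear constraints of Theorem 6)
Under constraints (i) `q_j(i) ≥ q_{j+1}(i)`, (ii) `q_j(i) ≤ q_j(i+1)`,
(iii) `q_i(i) ≥ q_{i+1}(i+1)` for `s ≤ i ≤ t−1`, and (iv)
`q_{m−k}(m−r+1)(B r − B k) ≥ q_{m−k−1}(m−r+1)(B r − B (k+1))` for `s ≤ k ≤ t`, `k+2 ≤ r ≤ m`,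
we have `p(x,i) ≤ max(p(−c, s−1), q_s(s))` for all `x ∈ [−c,c]`, `i ∈ {1,…,m}`. -/
theorem output_prob_max_bound_thm6
    (m : ℕ) (hm : 4 ≤ m)
    (B : ℕ → ℝ)
    (hB : ∀ i j : ℕ, 1 ≤ i → i < j → j ≤ m → B i < B j)
    (hsym : ∀ i : ℕ, 1 ≤ i → i ≤ m → B i = -B (m + 1 - i))
    (c : ℝ) (hc : 0 < c)
    (s t : ℕ) (hs2 : 2 ≤ s) (hst : s ≤ t) (ht : t ≤ m - 1)
    (hs_lt : B (s - 1) < -c) (hs_gt : -c < B s)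
    (ht_lt : B t < c) (ht_gt : c < B (t + 1))
    (q : ℕ → ℕ → ℝ)
    (hq_nonneg : ∀ n i : ℕ, 1 ≤ n → n ≤ m → 0 ≤ q n i)
    (hq_sum : ∀ n : ℕ, 1 ≤ n → n ≤ m → ∑ i ∈ Finset.Icc 1 n, q n i = 1)
    (h1 : ∀ i j : ℕ, 1 ≤ i → i ≤ j → j ≤ m - 1 → q (j + 1) i ≤ q j i)
    (h2 : ∀ i j : ℕ, 1 ≤ i → i < j → j ≤ m → q j i ≤ q j (i + 1))
    (h3 : ∀ i : ℕ, s ≤ i → i ≤ t - 1 → q (i + 1) (i + 1) ≤ q i i)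
    (h4 : ∀ k r : ℕ, s ≤ k → k ≤ t → k + 2 ≤ r → r ≤ m →
      q (m - k - 1) (m - r + 1) * (B r - B (k + 1)) ≤ q (m - k) (m - r + 1) * (B r - B k)) :
    ∀ x ∈ Set.Icc (-c) c, ∀ i ∈ Finset.Icc 1 m,
      pFun m B q x i ≤ max (pFun m B q (-c) (s - 1)) (q s s) := by
  exact output_prob_max_bound_thm6_general hB hsym hs2 hst ht hs_lt hs_gt ht_gt hq_nonneg hq_sum
    h2 h3
end
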